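/- Fix integers k ≥ 1 and m ≥ 1, let T be the ℚ-linear endomorphism of the free ℚ-module (Fin m → Fin k) →₀ ℚ induced by the cyclic shift σ, and set τ_m := T if m is odd and τ_m := −T if m is even. Then, as rational numbers, dim_ℚ ker(id − τ_m) = (1/m) · ∑_{e ∣ m} φ(m/e) · k^e if m is odd, and dim_ℚ ker(id − τ_m) = ∑_{d ∣ m, d even} (1/d) · ∑_{e ∣ d} μ(d/e) · k^e if m is even. (This is the combinatorial content of Propositions 1.10 and 5.14 of the paper: for W = ⋁_k S^{n+1} with n+1 even, the coefficient a_m of z^{mn} in the rational Poincaré series of H_*(𝓛W; ℚ) is given by these two formulas.) -/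

import Mathlib

/-- The cyclic shift on words of length `m` in `k` letters: `(σ w) i = w (i + 1)`
(for `m ≥ 1`, `finRotate m i = i + 1`). -/
def cyclicShift {k m : ℕ} (w : Fin m → Fin k) : Fin m → Fin k :=
  fun i => w (finRotate m i)

/-- The linear endomorphism of the free `ℚ`-module on the words induced by the cyclic
shift: it sends the basis vector of `w` to the basis vector of `σ w`. -/
noncomputable def shiftMap (k m : ℕ) : Module.End ℚ ((Fin m → Fin k) →₀ ℚ) :=
  Finsupp.lmapDomain ℚ ℚ cyclicShift

/-- The signed cyclic operator `τ_m` of display 5.7 of the paper (for generators of odd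
homological degree): `τ_m = T` if `m` is odd and `τ_m = −T` if `m` is even. -/
noncomputable def tauSigned (k m : ℕ) : Module.End ℚ ((Fin m → Fin k) →₀ ℚ) :=
  if Odd m then shiftMap k m else -(shiftMap k m)

/-!
If `t ^ m = 1`, then averaging the powers of `t` gives a projection onto `ker (1 - t)`, so the
dimension of this kernel is the average of the traces of `1, t, …, t ^ (m - 1)`. For `t = c • T`
the trace of `t ^ j` is `c ^ j` times the number of words fixed by `σ ^ j`; these are the words
with period `j`, equivalently the functions on `(ℤ/m) / ⟨j⟩`, a set of `gcd (m, j)` elements.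

For `c = 1`, grouping the indices `j` by the value of `gcd (m, j)` produces Euler's totient. For
`c = -1` and `m` even, write `k ^ n = ∑_{d ∣ n} F d` by Möbius inversion; the weight of `F d` is
then `∑_{d ∣ j} (-1) ^ j`, which is `m / d` for `d` even, while its terms cancel in pairs for
`d` odd.
-/

open Finset Function

section LinearAlgebra

theorem trace_lmapDomain {R α : Type*} [CommSemiring R] [Finite α] (f : α → α) :
    LinearMap.trace R (α →₀ R) (Finsupp.lmapDomain R R f) = Nat.card (fixedPoints f) := by
  classical
  have := Fintype.ofFinite α
  rw [LinearMap.trace_eq_matrix_trace R Finsupp.basisSingleOne, Matrix.trace,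
    Nat.card_eq_fintype_card, Fintype.card_subtype]
  simp [LinearMap.toMatrix_apply, Finsupp.single_apply, IsFixedPt]

variable {K V : Type*} [Field K] [AddCommGroup V] [Module K V] {t : Module.End K V} {m : ℕ}

theorem isProj_ker_id_sub_of_pow_eq_one (hm : (m : K) ≠ 0) (ht : t ^ m = 1) :
    LinearMap.IsProj (LinearMap.ker (LinearMap.id - t)) ((m : K)⁻¹ • ∑ j ∈ range m, t ^ j) where
  map_mem x := by
    have hannih : (1 - t) * ((m : K)⁻¹ • ∑ j ∈ range m, t ^ j) = 0 := by
      rw [mul_smul_comm, mul_neg_geom_sum, ht, sub_self, smul_zero]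
    exact LinearMap.congr_fun hannih x
  map_id x hx := by
    have hfix : IsFixedPt t x := (sub_eq_zero.mp hx).symm
    have hpow (j : ℕ) : (t ^ j) x = x := by
      rw [Module.End.pow_apply, hfix.iterate j]
    simp only [LinearMap.smul_apply, LinearMap.sum_apply, hpow, sum_const, card_range]
    rw [← Nat.cast_smul_eq_nsmul K, inv_smul_smul₀ hm]

theorem finrank_ker_id_sub_of_pow_eq_one [FiniteDimensional K V] (hm : (m : K) ≠ 0)
    (ht : t ^ m = 1) :
    (Module.finrank K (LinearMap.ker (LinearMap.id - t)) : K) =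
      (m : K)⁻¹ * ∑ j ∈ range m, LinearMap.trace K V (t ^ j) := by
  rw [← (isProj_ker_id_sub_of_pow_eq_one hm ht).trace, map_smul, map_sum, smul_eq_mul]

end LinearAlgebra

section PeriodicFunctions

variable {G : Type*} [AddGroup G]

/-- Functions with period `c` correspond to functions on the quotient by the subgroup generated
by `c`; this is `Function.Periodic.lift` as an equivalence. -/
def periodicEquivQuotient (c : G) (α : Type*) :
    {f : G → α // Periodic f c} ≃ (G ⧸ AddSubgroup.zmultiples c → α) where
  toFun f := f.2.lift
  invFun g := ⟨fun x => g x, fun x => congrArg g (QuotientAddGroup.mk_add_of_mem x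
    (AddSubgroup.mem_zmultiples c))⟩
  left_inv _ := rfl
  right_inv _ := funext fun x => QuotientAddGroup.induction_on x fun _ => rfl

theorem card_periodic (c : G) (α : Type*) [Finite (G ⧸ AddSubgroup.zmultiples c)] :
    Nat.card {f : G → α // Periodic f c} = Nat.card α ^ (AddSubgroup.zmultiples c).index := by
  rw [Nat.card_congr (periodicEquivQuotient c α), Nat.card_fun, AddSubgroup.index]

theorem index_zmultiples_nsmul [Finite G] {g : G} (hg : addOrderOf g = Nat.card G) (j : ℕ) :
    (AddSubgroup.zmultiples (j • g)).index = (Nat.card G).gcd j := by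
  have hcard : Nat.card (AddSubgroup.zmultiples (j • g)) = Nat.card G / (Nat.card G).gcd j := by
    rw [Nat.card_zmultiples, addOrderOf_nsmul, hg]
  refine Nat.eq_of_mul_eq_mul_left (Nat.div_gcd_pos_of_pos_left j (Nat.card_pos (α := G))) ?_
  rw [← hcard, AddSubgroup.card_mul_index, hcard, Nat.div_mul_cancel (Nat.gcd_dvd_left _ _)]

end PeriodicFunctions

section CyclicShift

variable {k m : ℕ}

theorem shiftMap_pow (j : ℕ) : shiftMap k m ^ j = Finsupp.lmapDomain ℚ ℚ cyclicShift^[j] := by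
  induction j with
  | zero => exact (Finsupp.lmapDomain_id ℚ ℚ).symm
  | succ j ih => rw [pow_succ, ih, iterate_succ, Finsupp.lmapDomain_comp]; rfl

variable [NeZero m]

theorem addOrderOf_fin_one : addOrderOf (1 : Fin m) = m := by
  rw [← map_one (ZMod.finEquiv m).symm]
  exact ((ZMod.finEquiv m).symm.toAddEquiv.addOrderOf_eq 1).trans (ZMod.addOrderOf_one m)

theorem cyclicShift_iterate_apply (j : ℕ) (w : Fin m → Fin k) (i : Fin m) :
    cyclicShift^[j] w i = w (i + j • 1) := by
  induction j generalizing i with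
  | zero => simp
  | succ j ih =>
    rw [iterate_succ_apply', cyclicShift, ih, finRotate_apply, succ_nsmul', add_assoc]

theorem cyclicShift_iterate_self : (cyclicShift (k := k) (m := m))^[m] = id := by
  funext w i
  have hone : m • (1 : Fin m) = 0 := by
    simpa only [addOrderOf_fin_one] using addOrderOf_nsmul_eq_zero (1 : Fin m)
  rw [cyclicShift_iterate_apply, hone, add_zero, id]

theorem card_fixedPoints_cyclicShift_iterate (j : ℕ) :
    Nat.card (fixedPoints (cyclicShift (k := k) (m := m))^[j]) = k ^ m.gcd j := by
  have hperiodic (w : Fin m → Fin k) :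
      w ∈ fixedPoints cyclicShift^[j] ↔ Periodic w (j • (1 : Fin m)) := by
    simp only [mem_fixedPoints, IsFixedPt, funext_iff, cyclicShift_iterate_apply, Periodic]
  rw [Nat.card_congr (Equiv.subtypeEquivRight hperiodic), card_periodic,
    index_zmultiples_nsmul (addOrderOf_fin_one.trans (Nat.card_fin m).symm), Nat.card_fin,
    Nat.card_fin]

theorem shiftMap_pow_self : shiftMap k m ^ m = 1 := by
  rw [shiftMap_pow, cyclicShift_iterate_self]
  exact Finsupp.lmapDomain_id ℚ ℚ

theorem trace_shiftMap_pow (j : ℕ) :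
    LinearMap.trace ℚ _ (shiftMap k m ^ j) = (k : ℚ) ^ m.gcd j := by
  rw [shiftMap_pow, trace_lmapDomain, card_fixedPoints_cyclicShift_iterate, Nat.cast_pow]

theorem finrank_ker_id_sub_smul_shiftMap {c : ℚ} (hc : c ^ m = 1) :
    (Module.finrank ℚ (LinearMap.ker (LinearMap.id - c • shiftMap k m)) : ℚ) =
      (m : ℚ)⁻¹ * ∑ j ∈ range m, c ^ j * (k : ℚ) ^ m.gcd j := by
  have hpow : (c • shiftMap k m) ^ m = 1 := by
    rw [smul_pow, hc, shiftMap_pow_self, one_smul]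
  rw [finrank_ker_id_sub_of_pow_eq_one (NeZero.ne _) hpow]
  simp only [smul_pow, map_smul, trace_shiftMap_pow, smul_eq_mul]

end CyclicShift

section GcdSums

theorem sum_range_gcd_eq_sum_totient_nsmul {M : Type*} [AddCommMonoid M] (f : ℕ → M) (m : ℕ) :
    ∑ j ∈ range m, f (m.gcd j) = ∑ e ∈ m.divisors, (m / e).totient • f e := by
  have hgcd : ∀ j ∈ range m, m.gcd j ∈ m.divisors := fun j hj =>
    Nat.mem_divisors.mpr ⟨Nat.gcd_dvd_left m j, Nat.ne_zero_of_lt (mem_range.mp hj)⟩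
  rw [← sum_fiberwise_of_maps_to' hgcd]
  refine sum_congr rfl fun e he => ?_
  rw [sum_const, Nat.totient_div_of_dvd (Nat.dvd_of_mem_divisors he)]

theorem sum_divisors_sum_moebius_mul {R : Type*} [NonAssocRing R] (f : ℕ → R) {n : ℕ}
    (hn : 0 < n) :
    ∑ d ∈ n.divisors, ∑ e ∈ d.divisors, (ArithmeticFunction.moebius (d / e) : R) * f e = f n :=
  ArithmeticFunction.sum_eq_iff_sum_mul_moebius_eq.mpr
    (fun _ _ => Nat.sum_divisorsAntidiagonal' fun a b =>
      (ArithmeticFunction.moebius a : R) * f b) n hn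

theorem sum_range_filter_dvd {M : Type*} [AddCommMonoid M] (g : ℕ → M) {m d : ℕ} (hd : d ∣ m) :
    ∑ j ∈ range m with d ∣ j, g j = ∑ i ∈ range (m / d), g (d * i) := by
  obtain rfl | hm := m.eq_zero_or_pos
  · simp
  have hpos : 0 < d := Nat.pos_of_dvd_of_pos hd hm
  symm
  refine sum_nbij' (d * ·) (· / d) (fun i hi => ?_) (fun j hj => ?_)
    (fun i _ => Nat.mul_div_cancel_left i hpos) (fun j hj => ?_) fun _ _ => rfl
  · exact mem_filter.mpr
      ⟨mem_range.mpr ((Nat.lt_div_iff_mul_lt' hd i).mp (mem_range.mp hi)), dvd_mul_right d i⟩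
  · exact mem_range.mpr
      (Nat.div_lt_div_of_lt_of_dvd hd (mem_range.mp (mem_filter.mp hj).1))
  · exact Nat.mul_div_cancel' (mem_filter.mp hj).2

theorem sum_range_mul_sum_divisors_gcd {R : Type*} [NonUnitalNonAssocSemiring R]
    (c F : ℕ → R) (m : ℕ) :
    ∑ j ∈ range m, c j * ∑ d ∈ (m.gcd j).divisors, F d =
      ∑ d ∈ m.divisors, (∑ i ∈ range (m / d), c (d * i)) * F d := by
  calc ∑ j ∈ range m, c j * ∑ d ∈ (m.gcd j).divisors, F d
      = ∑ j ∈ range m, ∑ d ∈ (m.gcd j).divisors, c j * F d := by simp only [mul_sum]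
    _ = ∑ d ∈ m.divisors, ∑ j ∈ range m with d ∣ j, c j * F d := by
      refine sum_comm' fun j d => ?_
      simp only [mem_range, Nat.mem_divisors, Nat.dvd_gcd_iff, mem_filter, ne_eq,
        Nat.gcd_eq_zero_iff]
      grind
    _ = ∑ d ∈ m.divisors, (∑ i ∈ range (m / d), c (d * i)) * F d :=
      sum_congr rfl fun d hd => by
        rw [← sum_mul, sum_range_filter_dvd c (Nat.dvd_of_mem_divisors hd)]

theorem sum_range_div_neg_one_pow_mul {R : Type*} [Ring R] {m d : ℕ} (hm : Even m) (hd : d ∣ m) :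
    ∑ i ∈ range (m / d), (-1 : R) ^ (d * i) = if Even d then ((m / d : ℕ) : R) else 0 := by
  simp only [pow_mul]
  split_ifs with heven
  · simp [heven.neg_one_pow]
  · have hquot : Even (m / d) := by
      rw [← Nat.mul_div_cancel' hd, Nat.even_mul] at hm
      exact hm.resolve_left heven
    rw [(Nat.not_even_iff_odd.mp heven).neg_one_pow, neg_one_geom_sum, if_pos hquot]

theorem sum_range_neg_one_pow_mul_gcd {R : Type*} [Ring R] (f : ℕ → R) {m : ℕ} (hm : Even m) :
    ∑ j ∈ range m, (-1) ^ j * f (m.gcd j) =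
      ∑ d ∈ m.divisors with Even d, ((m / d : ℕ) : R) *
        ∑ e ∈ d.divisors, (ArithmeticFunction.moebius (d / e) : R) * f e := by
  have hmoebius (j : ℕ) (hj : j ∈ range m) :
      f (m.gcd j) = ∑ d ∈ (m.gcd j).divisors,
        ∑ e ∈ d.divisors, (ArithmeticFunction.moebius (d / e) : R) * f e :=
    (sum_divisors_sum_moebius_mul f
      (Nat.gcd_pos_of_pos_left j (Nat.zero_lt_of_lt (mem_range.mp hj)))).symm
  rw [sum_congr rfl fun j hj => congrArg ((-1) ^ j * ·) (hmoebius j hj),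
    sum_range_mul_sum_divisors_gcd, sum_filter]
  refine sum_congr rfl fun d hd => ?_
  rw [sum_range_div_neg_one_pow_mul hm (Nat.dvd_of_mem_divisors hd), ite_mul, zero_mul]

end GcdSums

/-- Combinatorial content of Propositions 1.10 and 5.14: the `ℚ`-dimension of
`ker(id − τ_m)` equals `(1/m) ∑_{e ∣ m} φ(m/e) k^e` when `m` is odd, and
`∑_{d ∣ m, d even} (1/d) ∑_{e ∣ d} μ(d/e) k^e` when `m` is even. -/
theorem finrank_ker_id_sub_tauSigned (k m : ℕ) (hk : 1 ≤ k) (hm : 1 ≤ m) :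
    (Odd m →
      (Module.finrank ℚ (LinearMap.ker (LinearMap.id - tauSigned k m)) : ℚ) =
        (1 / (m : ℚ)) * ∑ e ∈ m.divisors, (Nat.totient (m / e) : ℚ) * (k : ℚ) ^ e) ∧
    (Even m →
      (Module.finrank ℚ (LinearMap.ker (LinearMap.id - tauSigned k m)) : ℚ) =
        ∑ d ∈ m.divisors.filter (fun d => Even d), (1 / (d : ℚ)) *
          ∑ e ∈ d.divisors, (ArithmeticFunction.moebius (d / e) : ℚ) * (k : ℚ) ^ e) := by
  have : NeZero m := ⟨Nat.one_le_iff_ne_zero.mp hm⟩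
  refine ⟨fun hodd => ?_, fun heven => ?_⟩
  · rw [tauSigned, if_pos hodd, ← one_smul ℚ (shiftMap k m),
      finrank_ker_id_sub_smul_shiftMap (one_pow m)]
    simp only [one_pow, one_mul, sum_range_gcd_eq_sum_totient_nsmul ((k : ℚ) ^ ·),
      nsmul_eq_mul, one_div]
  · rw [tauSigned, if_neg (Nat.not_odd_iff_even.mpr heven), ← neg_one_smul ℚ (shiftMap k m),
      finrank_ker_id_sub_smul_shiftMap heven.neg_one_pow,
      sum_range_neg_one_pow_mul_gcd ((k : ℚ) ^ ·) heven, mul_sum]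
    refine sum_congr rfl fun d hd => ?_
    have hweight : (m : ℚ)⁻¹ * ((m / d : ℕ) : ℚ) = 1 / d := by
      rw [Nat.cast_div_charZero (Nat.dvd_of_mem_divisors (mem_filter.mp hd).1),
        ← mul_div_assoc, inv_mul_cancel₀ (NeZero.ne _)]
    rw [← mul_assoc, hweight]
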